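/- arXiv:0912.5079 — 3 statements merged into one kernel-verified Lean document; each statement's English description precedes it below -/
import Mathlib

section
/- Under any uniformly avoiding source μ, for every index i ≥ k and every fixed k-tuple α ∈ (Fin σ)^k, the probability that the k-window at position i equals α satisfies μ(W_i = α) ≤ 1/(σ-k)^k. -/
open MeasureTheory ProbabilityTheory
open scoped Classical ENNReal

noncomputable section

/-- The `k`-window at position `i` of an infinite string `ω : ℕ → Fin σ`. -/
def Window {σ : ℕ} (k i : ℕ) (ω : ℕ → Fin σ) : Fin k → Fin σ :=
  fun t => ω (i + t)

/-- A *uniformly avoiding source*: a probability measure `μ` on `ℕ → Fin σ`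
(with the product σ-algebra) such that (i) almost surely the first `k`
coordinates are pairwise distinct, and (ii) conditioned on any positive-probability
history of length `n ≥ k` whose last `k` entries are pairwise distinct, the next
character is uniform on the `σ - k` characters not among the last `k` entries. -/
def UniformlyAvoiding {σ : ℕ} (k : ℕ) (μ : Measure (ℕ → Fin σ)) : Prop :=
  IsProbabilityMeasure μ ∧
  (∀ᵐ ω ∂μ, ∀ i j : ℕ, i < k → j < k → i ≠ j → ω i ≠ ω j) ∧
  ∀ n : ℕ, k ≤ n → ∀ a : ℕ → Fin σ,
    μ {ω | ∀ t < n, ω t = a t} ≠ 0 →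
    (∀ p q : ℕ, n - k ≤ p → p < n → n - k ≤ q → q < n → p ≠ q → a p ≠ a q) →
    ∀ b : Fin σ,
      (μ[|{ω | ∀ t < n, ω t = a t}]) {ω | ω n = b} =
        if ∃ t : ℕ, n - k ≤ t ∧ t < n ∧ a t = b then 0
        else 1 / ((σ - k : ℕ) : ℝ≥0∞)

def Cyl {σ : ℕ} (n : ℕ) (a : ℕ → Fin σ) : Set (ℕ → Fin σ) := {ω | ∀ t < n, ω t = a t}

lemma cyl_meas {σ : ℕ} (n : ℕ) (a : ℕ → Fin σ) : MeasurableSet (Cyl n a) := by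
  have : Cyl n a = ⋂ t, ⋂ (_ : t < n), (fun ω : ℕ → Fin σ => ω t) ⁻¹' {a t} := by
    ext ω; simp [Cyl]
  rw [this]
  exact MeasurableSet.iInter fun t => MeasurableSet.iInter fun _ =>
    measurable_pi_apply t (measurableSet_singleton _)

lemma cyl_succ {σ : ℕ} (n : ℕ) (a : ℕ → Fin σ) :
    Cyl (n + 1) a = Cyl n a ∩ {ω | ω n = a n} := by
  ext ω
  simp only [Cyl, Set.mem_setOf_eq, Set.mem_inter_iff]
  exact Nat.forall_lt_succ_right

lemma cyl_step {σ k : ℕ} (μ : Measure (ℕ → Fin σ)) (hμ : UniformlyAvoiding k μ)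
    (n : ℕ) (hn : k ≤ n) (a : ℕ → Fin σ) (h0 : μ (Cyl n a) ≠ 0)
    (hd : ∀ p q : ℕ, n - k ≤ p → p < n → n - k ≤ q → q < n → p ≠ q → a p ≠ a q) :
    μ (Cyl (n + 1) a) = (if ∃ t : ℕ, n - k ≤ t ∧ t < n ∧ a t = a n then 0
        else 1 / ((σ - k : ℕ) : ℝ≥0∞)) * μ (Cyl n a) := by
  have := hμ.1
  rw [← hμ.2.2 n hn a h0 hd (a n), cyl_succ]
  exact (cond_mul_eq_inter (cyl_meas n a) _ μ).symm

lemma cyl_distinct {σ k : ℕ} (μ : Measure (ℕ → Fin σ)) (hμ : UniformlyAvoiding k μ)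
    (n : ℕ) (hn : k ≤ n) (a : ℕ → Fin σ) (h0 : μ (Cyl n a) ≠ 0) :
    ∀ p q : ℕ, n - k ≤ p → p < n → n - k ≤ q → q < n → p ≠ q → a p ≠ a q := by
  induction n, hn using Nat.le_induction with
  | base =>
    intro p q _ hp _ hq hpq he
    apply h0
    refine measure_mono_null ?_ (ae_iff.1 hμ.2.1)
    intro ω hω hall
    exact hall p q hp hq hpq (by rw [hω p hp, hω q hq, he])
  | succ n hn ih =>
    have h1 : μ (Cyl n a) ≠ 0 := fun h => h0 (measure_mono_null
      (by rw [cyl_succ]; exact Set.inter_subset_left) h)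
    have hd := ih h1
    rw [cyl_step μ hμ n hn a h1 hd] at h0
    split_ifs at h0 with hex
    · simp at h0
    · push Not at hex
      intro p q hp1 hp2 hq1 hq2 hpq
      by_cases hp : p = n
      · subst hp
        exact (hex q (by omega) (by omega)).symm
      · by_cases hq : q = n
        · subst hq
          exact hex p (by omega) (by omega)
        · exact hd p q (by omega) (by omega) (by omega) (by omega) hpq

lemma cyl_le {σ k : ℕ} (μ : Measure (ℕ → Fin σ)) (hμ : UniformlyAvoiding k μ)
    (n : ℕ) (hn : k ≤ n) (a : ℕ → Fin σ) (m : ℕ) :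
    μ (Cyl (n + m) a) ≤ (1 / ((σ - k : ℕ) : ℝ≥0∞)) ^ m * μ (Cyl n a) := by
  induction m with
  | zero => simp
  | succ m ih =>
    have : μ (Cyl (n + m + 1) a) ≤ (1 / ((σ - k : ℕ) : ℝ≥0∞)) * μ (Cyl (n + m) a) := by
      by_cases h : μ (Cyl (n + m) a) = 0
      · rw [measure_mono_null (by rw [cyl_succ]; exact Set.inter_subset_left) h]
        exact zero_le
      · rw [cyl_step μ hμ (n + m) (by omega) a h (cyl_distinct μ hμ _ (by omega) a h)]
        gcongr
        split_ifs
        · exact zero_le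
        · exact le_rfl
    rw [pow_succ', mul_assoc]
    exact this.trans (by gcongr)

/-- Under any uniformly avoiding source `μ`, for every `i ≥ k` and every fixed
`k`-tuple `α`, the probability that the `k`-window at position `i` equals `α`
is at most `1/(σ-k)^k`. -/
theorem window_prob_le {σ k : ℕ} (hk : 1 ≤ k) (hσ : k < σ)
    (μ : Measure (ℕ → Fin σ)) (hμ : UniformlyAvoiding k μ)
    (i : ℕ) (hi : k ≤ i) (α : Fin k → Fin σ) :
    μ {ω | Window k i ω = α} ≤ 1 / ((σ - k : ℕ) : ℝ≥0∞) ^ k := by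
  have := hμ.1
  let r : (ℕ → Fin σ) → (Fin i → Fin σ) := fun ω t => ω t
  have hr : Measurable r := by fun_prop
  let a : (Fin i → Fin σ) → ℕ → Fin σ := fun f t =>
    if h : t < i then f ⟨t, h⟩ else if h : t - i < k then α ⟨t - i, h⟩ else ⟨0, by omega⟩
  have hsub : {ω | Window k i ω = α} ⊆ ⋃ f, Cyl (i + k) (a f) := by
    intro ω hω
    refine Set.mem_iUnion.2 ⟨r ω, ?_⟩
    intro t ht
    by_cases h : t < i
    · simp [a, r, h]
    · have h2 : t - i < k := by omega
      have := congrFun hω ⟨t - i, h2⟩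
      simp only [Window] at this
      simp only [a, h, h2, dite_true, dite_false]
      rw [← this]
      congr 1
      omega
  have hfib : ∀ f, Cyl i (a f) = r ⁻¹' {f} := by
    intro f
    ext ω
    simp only [Cyl, Set.mem_setOf_eq, Set.mem_preimage, Set.mem_singleton_iff, funext_iff, r]
    constructor
    · intro h t
      simpa [a] using h t t.2
    · intro h t ht
      simpa [a, ht] using h ⟨t, ht⟩
  calc μ {ω | Window k i ω = α} ≤ ∑ f, μ (Cyl (i + k) (a f)) :=
        (measure_mono hsub).trans (measure_iUnion_fintype_le _ _)
    _ ≤ ∑ f, (1 / ((σ - k : ℕ) : ℝ≥0∞)) ^ k * μ (r ⁻¹' {f}) := by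
        gcongr with f
        rw [← hfib]
        exact cyl_le μ hμ i hi (a f) k
    _ = (1 / ((σ - k : ℕ) : ℝ≥0∞)) ^ k := by
        rw [← Finset.mul_sum, sum_measure_preimage_singleton _
          (fun f _ => hr (measurableSet_singleton f))]
        simp
    _ = _ := by simp [ENNReal.inv_pow]
end
end

section
/- Under any uniformly avoiding source μ, for all indices i < j with j ≥ i + k, the probability that the k-windows at positions i and j coincide satisfies μ(W_i = W_j) ≤ 1/(σ-k)^k. -/
open MeasureTheory ProbabilityTheory
open scoped Classical ENNReal

noncomputable section

theorem ua_meas_cyl {σ : ℕ} (n : ℕ) (a : ℕ → Fin σ) :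
    MeasurableSet {ω : ℕ → Fin σ | ∀ t < n, ω t = a t} := by
  have : {ω : ℕ → Fin σ | ∀ t < n, ω t = a t} = ⋂ t, ⋂ (_ : t < n), (fun ω => ω t) ⁻¹' {a t} := by
    ext ω; simp
  rw [this]
  exact MeasurableSet.iInter fun t => MeasurableSet.iInter fun _ =>
    measurable_pi_apply t (measurableSet_singleton _)

theorem ua_distinct {σ k : ℕ} (μ : Measure (ℕ → Fin σ)) (hμ : UniformlyAvoiding k μ)
    (a : ℕ → Fin σ) (n : ℕ) (hn : k ≤ n) : μ {ω | ∀ t < n, ω t = a t} ≠ 0 →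
    (∀ p q : ℕ, n - k ≤ p → p < n → n - k ≤ q → q < n → p ≠ q → a p ≠ a q) := by
  obtain ⟨hP, h1, h2⟩ := hμ
  induction n, hn using Nat.le_induction with
  | base =>
    intro h0 p q _ hp _ hq hpq hapq
    apply h0
    refine measure_mono_null ?_ (ae_iff.1 h1)
    intro ω hω hall
    exact hall p q hp hq hpq (by rw [hω p hp, hω q hq, hapq])
  | succ n hn ih =>
    intro h0
    have hpos : μ {ω | ∀ t < n, ω t = a t} ≠ 0 := by
      intro h
      apply h0
      refine measure_mono_null ?_ h
      intro ω hω t ht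
      exact hω t (by omega)
    have hd := ih hpos
    have hnew : ∀ t, n - k ≤ t → t < n → a t ≠ a n := by
      intro t ht1 ht2 hat
      have hc := h2 n hn a hpos hd (a n)
      rw [if_pos ⟨t, ht1, ht2, hat⟩] at hc
      have hm := cond_mul_eq_inter (ua_meas_cyl n a) {ω : ℕ → Fin σ | ω n = a n} μ
      rw [hc, zero_mul] at hm
      apply h0
      refine measure_mono_null ?_ hm.symm
      intro ω hω
      exact ⟨fun t ht => hω t (by omega), hω n (by omega)⟩
    intro p q hp1 hp2 hq1 hq2 hpq
    rcases Nat.lt_succ_iff_lt_or_eq.1 hp2 with hp | hp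
    · rcases Nat.lt_succ_iff_lt_or_eq.1 hq2 with hq | hq
      · exact hd p q (by omega) hp (by omega) hq hpq
      · subst hq; exact hnew p (by omega) hp
    · subst hp; exact (hnew q (by omega) (by omega)).symm

theorem ua_step {σ k : ℕ} (μ : Measure (ℕ → Fin σ)) (hμ : UniformlyAvoiding k μ)
    (n : ℕ) (hn : k ≤ n) (E : Set (ℕ → Fin σ)) (s : ℕ) (hs : s < n)
    (hE : ∀ ω ω' : ℕ → Fin σ, (∀ t < n, ω' t = ω t) → ω ∈ E → ω' ∈ E) :
    μ (E ∩ {ω | ω n = ω s}) ≤ 1 / ((σ - k : ℕ) : ℝ≥0∞) * μ E := by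
  let r : (ℕ → Fin σ) → (Fin n → Fin σ) := fun ω t => ω t
  have hr : Measurable r := measurable_pi_lambda _ fun t => measurable_pi_apply _
  have hsum : ∀ S : Set (ℕ → Fin σ), μ S = ∑ f, μ (r ⁻¹' {f} ∩ S) := by
    intro S
    have := sum_measure_preimage_singleton (μ := μ.restrict S) (f := r) Finset.univ
      (fun y _ => hr (measurableSet_singleton y))
    simp only [Finset.coe_univ, Set.preimage_univ, Measure.restrict_apply_univ] at this
    rw [← this]
    exact Finset.sum_congr rfl fun f _ => Measure.restrict_apply (hr (measurableSet_singleton f))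
  rw [hsum (E ∩ _), hsum E, Finset.mul_sum]
  refine Finset.sum_le_sum fun f _ => ?_
  rcases (r ⁻¹' {f} ∩ E).eq_empty_or_nonempty with he | ⟨a, haf, haE⟩
  · rw [← Set.inter_assoc, he]; simp
  have hC : r ⁻¹' {f} = {ω | ∀ t < n, ω t = a t} := by
    have haf' : r a = f := haf
    subst haf'
    ext ω
    simp only [Set.mem_preimage, Set.mem_singleton_iff, Set.mem_setOf_eq, r, funext_iff]
    exact ⟨fun h t ht => h ⟨t, ht⟩, fun h t => h t t.2⟩
  have hCE : r ⁻¹' {f} ∩ E = {ω | ∀ t < n, ω t = a t} := by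
    rw [hC]
    exact Set.inter_eq_left.2 fun ω hω => hE a ω hω haE
  rw [← Set.inter_assoc, hCE]
  by_cases h0 : μ {ω | ∀ t < n, ω t = a t} = 0
  · rw [measure_mono_null Set.inter_subset_left h0]; exact zero_le
  have hc := hμ.2.2 n hn a h0 (ua_distinct μ hμ a n hn h0) (a s)
  have := hμ.1
  have hm := cond_mul_eq_inter (ua_meas_cyl n a) {ω : ℕ → Fin σ | ω n = a s} μ
  calc _ ≤ μ ({ω | ∀ t < n, ω t = a t} ∩ {ω : ℕ → Fin σ | ω n = a s}) :=
        measure_mono fun ω hω => ⟨hω.1, by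
          have h2 : ω n = ω s := hω.2
          rw [Set.mem_setOf_eq, h2, hω.1 s hs]⟩
    _ ≤ _ := by
        rw [← hm, hc]
        gcongr
        split_ifs
        · exact zero_le
        · exact le_rfl

/-- Under any uniformly avoiding source `μ`, for all indices `i < j` with `j ≥ i + k`,
the probability that the `k`-windows at positions `i` and `j` coincide is at most
`1/(σ-k)^k`. -/
theorem window_collision_prob_le {σ k : ℕ} (hk : 1 ≤ k) (hσ : k < σ)
    (μ : Measure (ℕ → Fin σ)) (hμ : UniformlyAvoiding k μ)
    (i j : ℕ) (hij : i < j) (hjk : i + k ≤ j) :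
    μ {ω | Window k i ω = Window k j ω} ≤ 1 / ((σ - k : ℕ) : ℝ≥0∞) ^ k := by
  have key : ∀ m ≤ k, μ {ω | ∀ t < m, ω (i + t) = ω (j + t)} ≤
      (1 / ((σ - k : ℕ) : ℝ≥0∞)) ^ m := by
    intro m
    induction m with
    | zero => intro _; have := hμ.1; simp
    | succ m ih =>
      intro hm
      have h := ua_step μ hμ (j + m) (by omega) {ω | ∀ t < m, ω (i + t) = ω (j + t)} (i + m)
        (by omega) (fun ω ω' h hω t ht => by
          rw [h (i + t) (by omega), h (j + t) (by omega)]; exact hω t ht)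
      rw [pow_succ']
      refine le_trans (le_trans (measure_mono ?_) h) (by gcongr; exact ih (by omega))
      intro ω hω
      exact ⟨fun t ht => hω t (by omega), (hω m (by omega)).symm⟩
  have h := key k le_rfl
  rw [one_div, ← ENNReal.inv_pow, ← one_div] at h
  refine le_trans (measure_mono ?_) h
  intro ω hω t ht
  exact congrFun hω ⟨t, ht⟩
end
end

section
/- Existence of long duplicate-free strings: fix an integer k ≥ 1 and a real ε with 0 < ε < k/2. For all sufficiently large σ, there exists a string s : Fin n → Fin σ with n = ⌊(σ-k)^{k/2-ε}⌋ that contains no duplicate k-tuples, i.e., for all indices 0 ≤ i < j ≤ n - k, the substrings (s_i, …, s_{i+k-1}) and (s_j, …, s_{j+k-1}) are distinct. -/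
noncomputable section

/-- The `k`-window of a finite string `s : Fin n → Fin σ` at a position `i` with
`i + k ≤ n`. -/
def FinWindow {σ n : ℕ} (k : ℕ) (s : Fin n → Fin σ) (i : ℕ) (h : i + k ≤ n) :
    Fin k → Fin σ :=
  fun t => s ⟨i + t.val, by have := t.isLt; omega⟩

/-- The length `⌊(σ-k)^(k/2-ε)⌋`. -/
def sampleLength (k : ℕ) (ε : ℝ) (σ : ℕ) : ℕ :=
  ⌊((σ - k : ℕ) : ℝ) ^ ((k : ℝ) / 2 - ε)⌋₊

theorem bad_card_aux {σ n k : ℕ} (i j : ℕ) (hij : i < j) (hi : i + k ≤ n) (hj : j + k ≤ n) :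
    (Finset.univ.filter fun s : Fin n → Fin σ =>
      FinWindow k s i hi = FinWindow k s j hj).card ≤ σ ^ (n - k) := by
  classical
  let A : Finset (Fin n) := Finset.univ.filter fun x => ¬ (j ≤ x.val ∧ x.val < j + k)
  have hA : A.card = n - k := by
    have h1 : (Finset.univ.filter fun x : Fin n => (j ≤ x.val ∧ x.val < j + k)).card = k := by
      have : (Finset.univ.filter fun x : Fin n => (j ≤ x.val ∧ x.val < j + k)).map
          Fin.valEmbedding = Finset.Ico j (j + k) := by
        ext x
        simp only [Finset.mem_map, Finset.mem_filter, Finset.mem_univ, true_and,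
          Fin.valEmbedding_apply, Finset.mem_Ico]
        constructor
        · rintro ⟨a, h, rfl⟩
          exact h
        · intro h
          exact ⟨⟨x, by omega⟩, h, rfl⟩
      rw [← Finset.card_map Fin.valEmbedding, this]
      simp
    have h2 := Finset.card_filter_add_card_filter_not (s := (Finset.univ : Finset (Fin n)))
      (fun x : Fin n => (j ≤ x.val ∧ x.val < j + k))
    rw [h1, Finset.card_univ, Fintype.card_fin] at h2
    change (Finset.univ.filter fun x : Fin n => ¬ (j ≤ x.val ∧ x.val < j + k)).card = n - k
    omega
  have hcard : (Finset.univ : Finset (A → Fin σ)).card = σ ^ (n - k) := by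
    rw [Finset.card_univ, Fintype.card_fun, Fintype.card_fin, Fintype.card_coe, hA]
  rw [← hcard]
  apply Finset.card_le_card_of_injOn (fun s (x : A) => s x.1)
  · intro s _
    simp
  · intro s hs s' hs' h
    simp only [Finset.coe_filter, Finset.mem_univ, true_and, Set.mem_setOf_eq] at hs hs'
    have key : ∀ m : ℕ, ∀ hm : m < n, s ⟨m, hm⟩ = s' ⟨m, hm⟩ := by
      intro m
      induction m using Nat.strong_induction_on with
      | _ m ih =>
        intro hm
        by_cases hmj : j ≤ m ∧ m < j + k
        · obtain ⟨t, rfl⟩ := Nat.exists_eq_add_of_le hmj.1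
          have e1 := congrFun hs ⟨t, by omega⟩
          have e2 := congrFun hs' ⟨t, by omega⟩
          simp only [FinWindow] at e1 e2
          rw [← e1, ← e2]
          exact ih (i + t) (by omega) (by omega)
        · exact congrFun h ⟨⟨m, hm⟩, by simpa [A] using hmj⟩
    funext x
    exact key x.1 x.2

theorem exists_aux {σ n k : ℕ} (hσ : 1 ≤ σ) (hk : 1 ≤ k) (hn : n * n ≤ σ ^ k) :
    ∃ s : Fin n → Fin σ, ∀ i j : ℕ, i < j → ∀ (hi : i + k ≤ n) (hj : j + k ≤ n),
      FinWindow k s i hi ≠ FinWindow k s j hj := by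
  classical
  by_cases hkn : n < k
  · exact ⟨fun _ => ⟨0, hσ⟩, fun i j _ hi _ => by omega⟩
  push Not at hkn
  by_contra hcon
  push Not at hcon
  let P : Finset (ℕ × ℕ) := (Finset.range n ×ˢ Finset.range n).filter fun p => p.1 < p.2
  have hP : P.card < n * n := by
    have : P ⊂ Finset.range n ×ˢ Finset.range n := by
      rw [Finset.filter_ssubset]
      exact ⟨(0, 0), by simp; omega, by simp⟩
    simpa using Finset.card_lt_card this
  let B : ℕ × ℕ → Finset (Fin n → Fin σ) := fun p =>
    Finset.univ.filter fun s => ∃ (_ : p.1 < p.2) (hi : p.1 + k ≤ n) (hj : p.2 + k ≤ n),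
      FinWindow k s p.1 hi = FinWindow k s p.2 hj
  have hB : ∀ p ∈ P, (B p).card ≤ σ ^ (n - k) := by
    intro p _
    by_cases h : p.1 < p.2 ∧ p.2 + k ≤ n
    · refine le_trans (Finset.card_le_card ?_)
        (bad_card_aux (σ := σ) p.1 p.2 h.1 (by omega) h.2)
      intro s hs
      simp only [B, Finset.mem_filter, Finset.mem_univ, true_and] at hs ⊢
      obtain ⟨_, _, _, e⟩ := hs
      exact e
    · have : B p = ∅ := by
        apply Finset.filter_eq_empty_iff.2
        rintro s _ ⟨h1, _, h3, _⟩
        exact h ⟨h1, h3⟩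
      simp [this]
  have hcov : (Finset.univ : Finset (Fin n → Fin σ)) ⊆ P.biUnion B := by
    intro s _
    obtain ⟨i, j, hij, hi, hj, e⟩ := hcon s
    rw [Finset.mem_biUnion]
    refine ⟨(i, j), ?_, ?_⟩
    · simp only [P, Finset.mem_filter, Finset.mem_product, Finset.mem_range]
      omega
    · simp only [B, Finset.mem_filter, Finset.mem_univ, true_and]
      exact ⟨hij, hi, hj, e⟩
  have h1 := (Finset.card_le_card hcov).trans (Finset.card_biUnion_le_card_mul P B _ hB)
  rw [Finset.card_univ, Fintype.card_fun, Fintype.card_fin, Fintype.card_fin] at h1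
  have h2 : σ ^ n = σ ^ k * σ ^ (n - k) := by
    rw [← pow_add]; congr 1; omega
  rw [h2] at h1
  have h3 : 0 < σ ^ (n - k) := by positivity
  have := Nat.le_of_mul_le_mul_right h1 h3
  omega

/-- Existence of long duplicate-free strings: for `k ≥ 1` and `0 < ε < k/2`, for all
sufficiently large `σ` there is a string of length `⌊(σ-k)^(k/2-ε)⌋` over `Fin σ`
containing no duplicate `k`-tuples. -/
theorem exists_duplicate_free_string (k : ℕ) (hk : 1 ≤ k) (ε : ℝ) (hε0 : 0 < ε)
    (hε : ε < (k : ℝ) / 2) :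
    ∃ σ₀ : ℕ, ∀ σ : ℕ, σ₀ ≤ σ →
      ∃ s : Fin (sampleLength k ε σ) → Fin σ,
        ∀ i j : ℕ, i < j →
          ∀ (hi : i + k ≤ sampleLength k ε σ) (hj : j + k ≤ sampleLength k ε σ),
            FinWindow k s i hi ≠ FinWindow k s j hj := by
  refine ⟨k + 1, fun σ hσ => exists_aux (by omega) hk ?_⟩
  have hb : (1 : ℝ) ≤ ((σ - k : ℕ) : ℝ) := by
    have : 1 ≤ σ - k := by omega
    exact_mod_cast this
  have hb0 : (0 : ℝ) ≤ ((σ - k : ℕ) : ℝ) := by linarith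
  have hle : ((sampleLength k ε σ : ℕ) : ℝ) ≤ ((σ - k : ℕ) : ℝ) ^ ((k : ℝ) / 2) :=
    (Nat.floor_le (Real.rpow_nonneg hb0 _)).trans
      (Real.rpow_le_rpow_of_exponent_le hb (by linarith))
  have h2 : ((sampleLength k ε σ : ℕ) : ℝ) * (sampleLength k ε σ : ℕ) ≤
      ((σ - k : ℕ) : ℝ) ^ k := by
    refine (mul_le_mul hle hle (Nat.cast_nonneg _) (Real.rpow_nonneg hb0 _)).trans ?_
    rw [← Real.rpow_add (by linarith), add_halves, Real.rpow_natCast]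
  have h3 : sampleLength k ε σ * sampleLength k ε σ ≤ (σ - k) ^ k := by exact_mod_cast h2
  exact h3.trans (Nat.pow_le_pow_left (by omega) k)
end
end
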